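/- Let R be a commutative ring, fix n ≥ 1, and let D, δ : R → R be derivations with D ∘ δ = δ ∘ D. Let Ω and Υ be n×n matrices over R and let ψ be an invertible n×n matrix over R with D(ψ) = -Ω·ψ (maps applied entrywise). Then Tr((D(Υ) + Ω·Υ - Υ·Ω)·δ(ψ)·ψ⁻¹) = D(Tr(Υ·δ(ψ)·ψ⁻¹)) + Tr(Υ·δ(Ω)). In particular, if δ₀ is a further derivation whose action on Ω satisfies the integrability condition δ₀(Ω) = D(Υ) + [Ω, Υ], then Tr(δ₀(Ω)·δ(ψ)·ψ⁻¹ - Υ·δ(Ω)) = D(Tr(Υ·δ(ψ)·ψ⁻¹)) is an exact derivative. -/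

import Mathlib

/-!
Write `A = δ(ψ) ψ⁻¹`. Applying `δ` to `D(ψ) = -Ω ψ`, and using that `D` and `δ` commute, gives
`D(δ(ψ)) = -δ(Ω) ψ - Ω δ(ψ)`, while differentiating `ψ ψ⁻¹ = 1` gives `D(ψ⁻¹) = ψ⁻¹ Ω`. Hence `A`
satisfies the inhomogeneous Lax equation `D(A) = -δ(Ω) - Ω A + A Ω` (`map_logDeriv`). Expanding
`D(Tr(Υ A))` by the Leibniz rule and using cyclicity of the trace yields the identity.
-/

/-- A derivation of a commutative ring: an additive map satisfying the Leibniz rule. -/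
def IsDerivation {R : Type*} [CommRing R] (D : R → R) : Prop :=
  (∀ a b, D (a + b) = D a + D b) ∧ (∀ a b, D (a * b) = D a * b + a * D b)

namespace IsDerivation

variable {R : Type*} [CommRing R] {D : R → R} {n : ℕ}

lemma map_zero' (hD : IsDerivation D) : D 0 = 0 := by
  simpa using hD.1 0 0

lemma map_one' (hD : IsDerivation D) : D 1 = 0 := by
  simpa using hD.2 1 1

lemma map_neg' (hD : IsDerivation D) (a : R) : D (-a) = -D a := by
  have h := hD.1 (-a) a
  rw [neg_add_cancel, hD.map_zero'] at h
  exact eq_neg_of_add_eq_zero_left h.symm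

lemma map_sum' (hD : IsDerivation D) {ι : Type*} (s : Finset ι) (f : ι → R) :
    D (∑ i ∈ s, f i) = ∑ i ∈ s, D (f i) :=
  map_sum (AddMonoidHom.mk' D hD.1) f s

lemma matrix_mul (hD : IsDerivation D) (A B : Matrix (Fin n) (Fin n) R) :
    (A * B).map D = A.map D * B + A * B.map D := by
  ext i j
  simp [Matrix.mul_apply, hD.map_sum', hD.2, Finset.sum_add_distrib]

lemma matrix_neg (hD : IsDerivation D) (A : Matrix (Fin n) (Fin n) R) :
    (-A).map D = -A.map D := by
  ext i j
  simp [hD.map_neg']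

lemma matrix_one (hD : IsDerivation D) :
    (1 : Matrix (Fin n) (Fin n) R).map D = 0 := by
  ext i j
  by_cases h : i = j <;> simp [Matrix.one_apply, h, hD.map_zero', hD.map_one']

lemma trace_map (hD : IsDerivation D) (A : Matrix (Fin n) (Fin n) R) :
    D A.trace = (A.map D).trace := by
  simp [Matrix.trace, hD.map_sum']

/-- If `ψ` solves `D(ψ) = -Ω ψ`, its inverse solves the adjoint equation `D(ψ⁻¹) = ψ⁻¹ Ω`. -/
lemma map_inv_of_sol (hD : IsDerivation D) {Ω ψ : Matrix (Fin n) (Fin n) R} (hψ : IsUnit ψ)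
    (hsol : ψ.map D = -(Ω * ψ)) : ψ⁻¹.map D = ψ⁻¹ * Ω := by
  have hdet := (Matrix.isUnit_iff_isUnit_det ψ).1 hψ
  have h := hD.matrix_mul ψ ψ⁻¹
  rw [Matrix.mul_nonsing_inv _ hdet, hD.matrix_one, hsol, Matrix.neg_mul,
    Matrix.mul_nonsing_inv_cancel_right _ _ hdet] at h
  have h2 : ψ * ψ⁻¹.map D = Ω := (neg_add_eq_zero.1 h.symm).symm
  rw [← Matrix.nonsing_inv_mul_cancel_left _ (ψ⁻¹.map D) hdet, h2]

/-- The inhomogeneous Lax equation `D(A) = -δ(Ω) - Ω A + A Ω` for `A = δ(ψ) ψ⁻¹`. -/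
lemma map_logDeriv (hD : IsDerivation D) {δ : R → R} (hδ : IsDerivation δ)
    (hcomm : D ∘ δ = δ ∘ D) {Ω ψ : Matrix (Fin n) (Fin n) R} (hψ : IsUnit ψ)
    (hsol : ψ.map D = -(Ω * ψ)) :
    (ψ.map δ * ψ⁻¹).map D
      = -Ω.map δ - Ω * (ψ.map δ * ψ⁻¹) + ψ.map δ * ψ⁻¹ * Ω := by
  have hdet := (Matrix.isUnit_iff_isUnit_det ψ).1 hψ
  have h : (ψ.map δ).map D = -(Ω.map δ * ψ + Ω * ψ.map δ) := by
    rw [Matrix.map_map, hcomm, ← Matrix.map_map, hsol, hδ.matrix_neg, hδ.matrix_mul]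
  rw [hD.matrix_mul, hD.map_inv_of_sol hψ hsol, h, Matrix.neg_mul, Matrix.add_mul,
    Matrix.mul_nonsing_inv_cancel_right _ _ hdet]
  noncomm_ring

end IsDerivation

/-- The key trace identity in the proof that the isomonodromy 2-form annihilates the
isomonodromic vector fields: `Tr((D(Υ)+[Ω,Υ])·δ(ψ)·ψ⁻¹) = D(Tr(Υ·δ(ψ)·ψ⁻¹)) + Tr(Υ·δ(Ω))`,
and consequently, for a derivation `δ₀` whose action on `Ω` satisfies the integrability
condition `δ₀(Ω) = D(Υ) + [Ω,Υ]`, the quantity `Tr(δ₀(Ω)·δ(ψ)·ψ⁻¹ - Υ·δ(Ω))` is the exact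
derivative `D(Tr(Υ·δ(ψ)·ψ⁻¹))`. -/
theorem stmt3 {R : Type*} [CommRing R] (n : ℕ) (hn : 1 ≤ n)
    (D δ : R → R)
    (hD : IsDerivation D) (hδ : IsDerivation δ)
    (hcomm : D ∘ δ = δ ∘ D)
    (Ω Υ ψ : Matrix (Fin n) (Fin n) R)
    (hψ : IsUnit ψ)
    (hsol : ψ.map D = -(Ω * ψ)) :
    ((Υ.map D + (Ω * Υ - Υ * Ω)) * ψ.map δ * ψ⁻¹).trace
        = D ((Υ * ψ.map δ * ψ⁻¹).trace) + (Υ * Ω.map δ).trace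
    ∧ ∀ δ₀ : R → R, IsDerivation δ₀ →
        Ω.map δ₀ = Υ.map D + (Ω * Υ - Υ * Ω) →
        (Ω.map δ₀ * ψ.map δ * ψ⁻¹ - Υ * Ω.map δ).trace
          = D ((Υ * ψ.map δ * ψ⁻¹).trace) := by
  have main : ((Υ.map D + (Ω * Υ - Υ * Ω)) * ψ.map δ * ψ⁻¹).trace
      = D ((Υ * ψ.map δ * ψ⁻¹).trace) + (Υ * Ω.map δ).trace := by
    rw [hD.trace_map, Matrix.mul_assoc Υ, hD.matrix_mul, hD.map_logDeriv hδ hcomm hψ hsol,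
      Matrix.mul_assoc _ (ψ.map δ)]
    generalize ψ.map δ * ψ⁻¹ = A
    have hcyc : (Ω * Υ * A).trace = (Υ * A * Ω).trace := by
      rw [Matrix.mul_assoc, Matrix.trace_mul_comm]
    simp only [Matrix.add_mul, Matrix.sub_mul, Matrix.mul_add, Matrix.mul_sub, Matrix.mul_neg,
      Matrix.trace_add, Matrix.trace_sub, Matrix.trace_neg, hcyc, ← Matrix.mul_assoc]
    ring
  refine ⟨main, fun δ₀ _ hint => ?_⟩
  rw [Matrix.trace_sub, hint, main, add_sub_cancel_right]
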